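/- Let f_i : ℝ^d → ℝ, i ∈ {1,…,n}, be twice continuously differentiable with ‖∇²f_i(x) − ∇²f_i(y)‖ ≤ H‖x − y‖ (spectral norm), let f := (1/n)Σ_i f_i be μ-strongly convex (μ > 0), and let x* satisfy ∇f(x*) = 0. For each i, let {B_i^{jl} : j,l ∈ [d]} be real d×d matrices with ‖B_i^{jl}‖_F ≤ R and let ℓ_i : ℝ^d → ℝ^{d×d} satisfy ∇²f_i(x) = Σ_{j,l} (ℓ_i(x))_{jl} B_i^{jl} for all x and ‖ℓ_i(x) − ℓ_i(y)‖_F ≤ M₁‖x − y‖. Set N_B := 1 if for every i the family {B_i^{jl}} is pairwise orthogonal in the Frobenius inner product, and N_B := d² otherwise. Fix 0 < δ ≤ 1 and 0 < δ_M ≤ 1 and set A_M := δ_M/4, B_M := 6/δ_M − 7/2. Consider sequences z^k ∈ ℝ^d and L_i^k ∈ ℝ^{d×d} (k ≥ 0) generated by: L_i^{k+1} = L_i^k + S_i^k where ‖S_i^k − (ℓ_i(z^k) − L_i^k)‖_F² ≤ (1 − δ)‖ℓ_i(z^k) − L_i^k‖_F²; H^k := (1/n)Σ_i Σ_{j,l}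 (L_i^k)_{jl} B_i^{jl}; Ĥ^k a symmetric matrix with Ĥ^k ⪰ μI and ‖Ĥ^k − ∇²f(x*)‖_F ≤ ‖H^k − ∇²f(x*)‖_F; x^{k+1} := z^k − (Ĥ^k)⁻¹ ∇f(z^k); and z^{k+1} := z^k + v^k where ‖v^k − (x^{k+1} − z^k)‖² ≤ (1 − δ_M)‖x^{k+1} − z^k‖². Define 𝓗^k := (1/n)Σ_i ‖L_i^k − ℓ_i(x*)‖_F². If for every k ≥ 0 one has ‖z^k − x*‖² ≤ A_M μ²/(4H² B_M) and 𝓗^k ≤ A_M μ²/(16 N_B R² B_M), then ‖z^k − x*‖² ≤ (1 − A_M/2)^k ‖z⁰ − x*‖² for all k ≥ 0. -/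

import Mathlib

open Matrix Classical

/-- Frobenius inner product of matrices. -/
noncomputable def frobInner {d : ℕ} (M N : Matrix (Fin d) (Fin d) ℝ) : ℝ :=
  ∑ s, ∑ t, M s t * N s t

/-- Frobenius norm squared: sum of squares of all entries. -/
noncomputable def frobSq {d : ℕ} (M : Matrix (Fin d) (Fin d) ℝ) : ℝ :=
  ∑ i, ∑ j, (M i j) ^ 2

/-- Frobenius norm. -/
noncomputable def frobNorm {d : ℕ} (M : Matrix (Fin d) (Fin d) ℝ) : ℝ :=
  Real.sqrt (frobSq M)

/-- Spectral norm (operator 2-norm) of a matrix. -/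
noncomputable def specNorm {d : ℕ} (M : Matrix (Fin d) (Fin d) ℝ) : ℝ :=
  ‖Matrix.toEuclideanCLM (𝕜 := ℝ) M‖

/-- The Hessian matrix of `f` at `x` (the derivative of the gradient). -/
noncomputable def hess {d : ℕ} (f : EuclideanSpace ℝ (Fin d) → ℝ)
    (x : EuclideanSpace ℝ (Fin d)) : Matrix (Fin d) (Fin d) ℝ :=
  fun j l => fderiv ℝ (gradient f) x (EuclideanSpace.single l 1) j

lemma toCLM_apply' {d : ℕ} (M : Matrix (Fin d) (Fin d) ℝ) (v : EuclideanSpace ℝ (Fin d)) (s : Fin d) :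
    Matrix.toEuclideanCLM (𝕜 := ℝ) M v s = ∑ t, M s t * v t := by
  simp [Matrix.ofLp_toEuclideanCLM, Matrix.mulVec, dotProduct]

lemma frobSq_nonneg' {d : ℕ} (M : Matrix (Fin d) (Fin d) ℝ) : 0 ≤ frobSq M := by
  unfold frobSq; positivity

lemma norm_apply_le_frob {d : ℕ} (M : Matrix (Fin d) (Fin d) ℝ) (v : EuclideanSpace ℝ (Fin d)) :
    ‖Matrix.toEuclideanCLM (𝕜 := ℝ) M v‖ ≤ frobNorm M * ‖v‖ := by
  have h : ‖Matrix.toEuclideanCLM (𝕜 := ℝ) M v‖ ^ 2 ≤ frobSq M * ‖v‖ ^ 2 := by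
    simp only [EuclideanSpace.norm_sq_eq, toCLM_apply', Real.norm_eq_abs, sq_abs, frobSq,
      Finset.sum_mul]
    refine Finset.sum_le_sum fun s _ => ?_
    refine (Finset.sum_mul_sq_le_sq_mul_sq _ _ _).trans ?_
    rw [Finset.sum_mul]
  apply le_of_sq_le_sq _ (by unfold frobNorm; positivity)
  rw [mul_pow, frobNorm, Real.sq_sqrt (frobSq_nonneg' M)]; exact h

lemma frob_avg {d n : ℕ} (hn : 1 ≤ n) (X : Fin n → Matrix (Fin d) (Fin d) ℝ) :
    frobSq ((1 / (n : ℝ)) • ∑ i, X i) ≤ (1 / (n : ℝ)) * ∑ i, frobSq (X i) := by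
  have hn' : (0 : ℝ) < n := by exact_mod_cast hn
  have h : ∀ s t, (((1 / (n : ℝ)) • ∑ i, X i) s t) ^ 2 ≤ (1 / (n : ℝ)) * ∑ i, (X i s t) ^ 2 := by
    intro s t
    have := sq_sum_le_card_mul_sum_sq (s := Finset.univ) (f := fun i => X i s t)
    simp only [Finset.card_univ, Fintype.card_fin] at this
    simp only [Matrix.smul_apply, Matrix.sum_apply, smul_eq_mul, mul_pow]
    calc (1 / (n : ℝ)) ^ 2 * (∑ i, X i s t) ^ 2 ≤ (1 / (n : ℝ)) ^ 2 * (n * ∑ i, X i s t ^ 2) := by gcongr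
      _ = _ := by field_simp
  unfold frobSq
  calc _ ≤ ∑ s, ∑ t, (1 / (n : ℝ)) * ∑ i, (X i s t) ^ 2 :=
        Finset.sum_le_sum fun s _ => Finset.sum_le_sum fun t _ => h s t
    _ = _ := by
      simp only [← Finset.mul_sum]
      congr 1
      rw [Finset.sum_comm]
      simp only [Finset.sum_comm (γ := Fin n)]
      rw [Finset.sum_comm]

lemma frob_expand_gen {d : ℕ} (c : Matrix (Fin d) (Fin d) ℝ)
    (B : Fin d → Fin d → Matrix (Fin d) (Fin d) ℝ) (R : ℝ) (hB : ∀ j l, frobSq (B j l) ≤ R ^ 2) :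
    frobSq (∑ j, ∑ l, c j l • B j l) ≤ (d : ℝ) ^ 2 * R ^ 2 * frobSq c := by
  have h : ∀ s t, ((∑ j, ∑ l, c j l • B j l) s t) ^ 2 ≤ frobSq c * ∑ p : Fin d × Fin d, (B p.1 p.2 s t) ^ 2 := by
    intro s t
    have := Finset.sum_mul_sq_le_sq_mul_sq Finset.univ (fun p : Fin d × Fin d => c p.1 p.2) (fun p => B p.1 p.2 s t)
    simp only [Matrix.sum_apply, Matrix.smul_apply, smul_eq_mul, frobSq]
    simpa only [Fintype.sum_prod_type] using this
  calc frobSq (∑ j, ∑ l, c j l • B j l) ≤ ∑ s, ∑ t, frobSq c * ∑ p : Fin d × Fin d, (B p.1 p.2 s t) ^ 2 :=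
        Finset.sum_le_sum fun s _ => Finset.sum_le_sum fun t _ => h s t
    _ = frobSq c * ∑ p : Fin d × Fin d, frobSq (B p.1 p.2) := by
      simp only [← Finset.mul_sum, frobSq]
      congr 1
      rw [Finset.sum_comm' (t' := Finset.univ) (s' := fun _ => Finset.univ) (by simp)]
      simp only [Finset.sum_comm (γ := Fin d × Fin d)]
      rw [Finset.sum_comm]
    _ ≤ frobSq c * ∑ p : Fin d × Fin d, R ^ 2 := by
      have := frobSq_nonneg' c
      gcongr with p; exact hB _ _
    _ = _ := by simp; ring

lemma frob_expand_orth {d : ℕ} (c : Matrix (Fin d) (Fin d) ℝ)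
    (B : Fin d → Fin d → Matrix (Fin d) (Fin d) ℝ) (R : ℝ) (hB : ∀ j l, frobSq (B j l) ≤ R ^ 2)
    (ho : ∀ j l j' l' : Fin d, (j, l) ≠ (j', l') → frobInner (B j l) (B j' l') = 0) :
    frobSq (∑ j, ∑ l, c j l • B j l) ≤ 1 * R ^ 2 * frobSq c := by
  have e : frobSq (∑ j, ∑ l, c j l • B j l) = ∑ p : Fin d × Fin d, ∑ q : Fin d × Fin d,
      c p.1 p.2 * c q.1 q.2 * frobInner (B p.1 p.2) (B q.1 q.2) := by
    have e1 : ∀ s t, ((∑ j, ∑ l, c j l • B j l) s t) ^ 2 = ∑ p : Fin d × Fin d, ∑ q : Fin d × Fin d,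
      c p.1 p.2 * c q.1 q.2 * (B p.1 p.2 s t * B q.1 q.2 s t) := by
      intro s t
      have : (∑ j, ∑ l, c j l • B j l) s t = ∑ p : Fin d × Fin d, c p.1 p.2 * B p.1 p.2 s t := by
        simp only [Matrix.sum_apply, Matrix.smul_apply, smul_eq_mul, Fintype.sum_prod_type]
      rw [this, sq, Finset.sum_mul_sum]
      refine Finset.sum_congr rfl fun p _ => Finset.sum_congr rfl fun q _ => by ring
    unfold frobSq frobInner
    simp only [e1, Finset.mul_sum]
    rw [← Fintype.sum_prod_type' (f := fun s t => ∑ p : Fin d × Fin d, ∑ q : Fin d × Fin d,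
      c p.1 p.2 * c q.1 q.2 * (B p.1 p.2 s t * B q.1 q.2 s t)), Finset.sum_comm]
    refine Finset.sum_congr rfl fun p _ => ?_
    rw [Finset.sum_comm]
    refine Finset.sum_congr rfl fun q _ => ?_
    rw [Fintype.sum_prod_type]
  have e2 : ∀ M : Matrix (Fin d) (Fin d) ℝ, frobInner M M = frobSq M := by
    intro M; simp only [frobInner, frobSq, sq]
  rw [e]
  calc _ = ∑ p : Fin d × Fin d, c p.1 p.2 ^ 2 * frobSq (B p.1 p.2) := by
        refine Finset.sum_congr rfl fun p _ => ?_
        rw [Finset.sum_eq_single p]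
        · rw [e2]; ring
        · intro q _ hq
          rw [ho _ _ _ _ (fun h => hq h.symm)]; ring
        · simp
    _ ≤ ∑ p : Fin d × Fin d, c p.1 p.2 ^ 2 * R ^ 2 := by
        gcongr with p; exact hB _ _
    _ = _ := by
        rw [← Finset.sum_mul, Fintype.sum_prod_type]; unfold frobSq; ring

lemma coercive {d : ℕ} (A : Matrix (Fin d) (Fin d) ℝ) (μ : ℝ) (hμ : 0 < μ)
    (h : (A - μ • (1 : Matrix (Fin d) (Fin d) ℝ)).PosSemidef) (v : EuclideanSpace ℝ (Fin d)) :
    μ * ‖v‖ ≤ ‖Matrix.toEuclideanCLM (𝕜 := ℝ) A v‖ := by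
  have h1 := h.dotProduct_mulVec_nonneg v.ofLp
  have h2 : μ * ‖v‖ ^ 2 ≤ inner ℝ v (Matrix.toEuclideanCLM (𝕜 := ℝ) A v) := by
    have : inner ℝ v (Matrix.toEuclideanCLM (𝕜 := ℝ) A v) - μ * ‖v‖ ^ 2 =
       star v.ofLp ⬝ᵥ (A - μ • (1 : Matrix (Fin d) (Fin d) ℝ)) *ᵥ v.ofLp := by
      have e : ‖v‖ ^ 2 = v.ofLp ⬝ᵥ v.ofLp := by
        rw [← real_inner_self_eq_norm_sq]; simp [EuclideanSpace.inner_eq_star_dotProduct, -inner_self_eq_norm_sq_to_K]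
      rw [e]
      simp [Matrix.sub_mulVec, Matrix.smul_mulVec, dotProduct_sub, EuclideanSpace.inner_eq_star_dotProduct, Matrix.ofLp_toEuclideanCLM, dotProduct_comm]
    linarith
  have h3 := real_inner_le_norm v (Matrix.toEuclideanCLM (𝕜 := ℝ) A v)
  rcases (norm_nonneg v).eq_or_lt with h0 | h0
  · rw [← h0]; simp
  · nlinarith

lemma det_unit {d : ℕ} (A : Matrix (Fin d) (Fin d) ℝ) (μ : ℝ) (hμ : 0 < μ)
    (h : (A - μ • (1 : Matrix (Fin d) (Fin d) ℝ)).PosSemidef) : IsUnit A.det := by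
  have : A.PosDef := by
    have h1 : (μ • (1 : Matrix (Fin d) (Fin d) ℝ)).PosDef := Matrix.PosDef.one.smul hμ
    simpa using h1.add_posSemidef h
  exact (Matrix.isUnit_iff_isUnit_det _).1 this.isUnit

lemma grad_contDiff {d : ℕ} (f : EuclideanSpace ℝ (Fin d) → ℝ) (hf : ContDiff ℝ 2 f) :
    Differentiable ℝ (gradient f) := by
  have h1 : ContDiff ℝ 1 (fderiv ℝ f) := hf.fderiv_right (by norm_num)
  have h2 : Differentiable ℝ (fderiv ℝ f) := h1.differentiable (by norm_num)
  exact (InnerProductSpace.toDual ℝ (EuclideanSpace ℝ (Fin d))).symm.toContinuousLinearEquiv.differentiable.comp h2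

lemma hess_clm {d : ℕ} (f : EuclideanSpace ℝ (Fin d) → ℝ) (x : EuclideanSpace ℝ (Fin d)) :
    Matrix.toEuclideanCLM (𝕜 := ℝ) (hess f x) = fderiv ℝ (gradient f) x := by
  apply ContinuousLinearMap.coe_injective
  refine (EuclideanSpace.basisFun (Fin d) ℝ).toBasis.ext fun l => ?_
  ext s
  simp only [OrthonormalBasis.coe_toBasis, EuclideanSpace.basisFun_apply, ContinuousLinearMap.coe_coe, toCLM_apply']
  simp [hess]

lemma grad_avg {d n : ℕ} (f : Fin n → EuclideanSpace ℝ (Fin d) → ℝ)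
    (hf : ∀ i, ContDiff ℝ 2 (f i)) :
    gradient (fun x => (1 / (n : ℝ)) * ∑ i, f i x) = fun x => (1 / (n : ℝ)) • ∑ i, gradient (f i) x := by
  funext x
  have hd : ∀ i, DifferentiableAt ℝ (f i) x := fun i => (hf i).differentiable (by norm_num) x
  unfold gradient
  rw [fderiv_const_mul (by fun_prop), fderiv_fun_sum (fun i _ => hd i)]
  simp

lemma hess_avg {d n : ℕ} (f : Fin n → EuclideanSpace ℝ (Fin d) → ℝ)
    (hf : ∀ i, ContDiff ℝ 2 (f i)) (x : EuclideanSpace ℝ (Fin d)) :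
    hess (fun x => (1 / (n : ℝ)) * ∑ i, f i x) x = (1 / (n : ℝ)) • ∑ i, hess (f i) x := by
  have hd : ∀ i, DifferentiableAt ℝ (gradient (f i)) x := fun i => grad_contDiff _ (hf i) x
  ext s t
  rw [Matrix.smul_apply, Matrix.sum_apply]
  simp only [hess]
  rw [grad_avg f hf, fderiv_fun_const_smul (by fun_prop), fderiv_fun_sum (fun i _ => hd i)]
  simp

lemma taylor {d : ℕ} (f : EuclideanSpace ℝ (Fin d) → ℝ) (hf : ContDiff ℝ 2 f) (H : ℝ) (hH0 : 0 ≤ H)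
    (hH : ∀ x y, specNorm (hess f x - hess f y) ≤ H * ‖x - y‖) (z y : EuclideanSpace ℝ (Fin d)) :
    ‖gradient f z - gradient f y - Matrix.toEuclideanCLM (𝕜 := ℝ) (hess f y) (z - y)‖ ≤ H * ‖z - y‖ ^ 2 := by
  have hd := grad_contDiff f hf
  have := (convex_segment (𝕜 := ℝ) y z).norm_image_sub_le_of_norm_fderiv_le' (f := gradient f) (𝕜 := ℝ)
    (C := H * ‖z - y‖) (φ := fderiv ℝ (gradient f) y) (x := y) (y := z) (fun w _ => hd w) (fun w hw => by
      have := hH w y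
      rw [specNorm, map_sub, hess_clm, hess_clm] at this
      refine this.trans ?_
      gcongr
      have := segment_subset_closedBall_left y z hw
      rw [mem_closedBall_iff_norm] at this
      rwa [dist_comm, dist_eq_norm] at this) (left_mem_segment _ _ _) (right_mem_segment _ _ _)
  rw [hess_clm]
  linarith

lemma taylor_avg {d n : ℕ} (hn : 1 ≤ n) (f : Fin n → EuclideanSpace ℝ (Fin d) → ℝ)
    (hf : ∀ i, ContDiff ℝ 2 (f i)) (H : ℝ) (hH0 : 0 ≤ H)
    (hH : ∀ i x y, specNorm (hess (f i) x - hess (f i) y) ≤ H * ‖x - y‖) (z y : EuclideanSpace ℝ (Fin d))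
    (fbar : EuclideanSpace ℝ (Fin d) → ℝ) (hfbar : fbar = fun x => (1 / (n : ℝ)) * ∑ i, f i x) :
    ‖gradient fbar z - gradient fbar y - Matrix.toEuclideanCLM (𝕜 := ℝ) (hess fbar y) (z - y)‖ ≤ H * ‖z - y‖ ^ 2 := by
  have hn' : (0 : ℝ) < n := by exact_mod_cast hn
  have e : gradient fbar z - gradient fbar y - Matrix.toEuclideanCLM (𝕜 := ℝ) (hess fbar y) (z - y)
     = (1 / (n : ℝ)) • ∑ i, (gradient (f i) z - gradient (f i) y - Matrix.toEuclideanCLM (𝕜 := ℝ) (hess (f i) y) (z - y)) := by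
    rw [hfbar, hess_avg f hf, grad_avg f hf, map_smul, map_sum, Finset.sum_sub_distrib, Finset.sum_sub_distrib]
    simp only [_root_.smul_sub, _root_.smul_apply, _root_.sum_apply]
  rw [e, norm_smul]
  have h1 : ‖∑ i, (gradient (f i) z - gradient (f i) y - Matrix.toEuclideanCLM (𝕜 := ℝ) (hess (f i) y) (z - y))‖
     ≤ n * (H * ‖z - y‖ ^ 2) := by
    refine (norm_sum_le_of_le (f := fun i => gradient (f i) z - gradient (f i) y - Matrix.toEuclideanCLM (𝕜 := ℝ) (hess (f i) y) (z - y)) _ (fun i _ => taylor (f i) (hf i) H hH0 (hH i) z y)).trans ?_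
    simp
  rw [Real.norm_of_nonneg (by positivity)]
  calc _ ≤ 1 / (n : ℝ) * (n * (H * ‖z - y‖ ^ 2)) := by gcongr
    _ = _ := by field_simp

lemma step_real (δ a b c : ℝ) (h0 : 0 < δ) (h1 : δ ≤ 1) (ha : 0 ≤ a) (hb : 0 ≤ b) (hc0 : 0 ≤ c)
    (hb2 : b ^ 2 ≤ 9 / 16 * (δ ^ 2 / (24 - 14 * δ)) * a ^ 2)
    (hc : c ≤ b + (1 - δ / 2) * (a + b)) : c ^ 2 ≤ (1 - δ / 8) * a ^ 2 := by
  have hp : 0 < 24 - 14 * δ := by linarith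
  have k1 : b * (2 - δ / 2) ≤ 13 / 30 * δ * a := by
    apply le_of_sq_le_sq _ (by positivity)
    have k2 : 9 / 16 * (2 - δ / 2) ^ 2 ≤ 169 / 900 * (24 - 14 * δ) := by nlinarith
    calc (b * (2 - δ / 2)) ^ 2 = b ^ 2 * (2 - δ / 2) ^ 2 := by ring
      _ ≤ 9 / 16 * (δ ^ 2 / (24 - 14 * δ)) * a ^ 2 * (2 - δ / 2) ^ 2 := by gcongr
      _ = (δ ^ 2 / (24 - 14 * δ)) * a ^ 2 * (9 / 16 * (2 - δ / 2) ^ 2) := by ring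
      _ ≤ (δ ^ 2 / (24 - 14 * δ)) * a ^ 2 * (169 / 900 * (24 - 14 * δ)) := by gcongr
      _ = (δ ^ 2 / (24 - 14 * δ) * (24 - 14 * δ)) * (169 / 900 * a ^ 2) := by ring
      _ = _ := by rw [div_mul_cancel₀ _ hp.ne']; ring
  have k3 : c ≤ (1 - δ / 15) * a := by linarith
  calc c ^ 2 ≤ ((1 - δ / 15) * a) ^ 2 := by gcongr
    _ = (1 - δ / 15) ^ 2 * a ^ 2 := by ring
    _ ≤ _ := by gcongr; nlinarith

lemma main_step (δM μ H a b F : ℝ) (hδ0 : 0 < δM) (hδ1 : δM ≤ 1) (hμ : 0 < μ) (hH : 0 < H)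
    (ha : 0 ≤ a) (hb : 0 ≤ b) (hF0 : 0 ≤ F) (AM BM : ℝ) (hAM : AM = δM / 4) (hBM : BM = 6 / δM - 7 / 2)
    (h1 : a ^ 2 ≤ AM * μ ^ 2 / (4 * H ^ 2 * BM)) (h2 : F ^ 2 ≤ AM * μ ^ 2 / (16 * BM))
    (h3 : μ * b ≤ F * a + H * a ^ 2) : b ^ 2 ≤ 9 / 16 * (δM ^ 2 / (24 - 14 * δM)) * a ^ 2 := by
  have hp : 0 < 24 - 14 * δM := by linarith
  have hB : BM = (24 - 14 * δM) / (4 * δM) := by rw [hBM]; field_simp; ring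
  have hBpos : 0 < BM := by rw [hB]; positivity
  have hq : δM ^ 2 / (24 - 14 * δM) = AM / BM := by
    rw [hB, hAM]; field_simp
  rw [hq]
  have hApos : 0 < AM := by rw [hAM]; positivity
  obtain ⟨q, hq0, hq2⟩ : ∃ q : ℝ, 0 ≤ q ∧ q ^ 2 = AM / BM :=
    ⟨Real.sqrt (AM / BM), Real.sqrt_nonneg _, Real.sq_sqrt (by positivity)⟩
  rw [← hq2]
  have k1 : H * a ≤ q * μ / 2 := by
    apply le_of_sq_le_sq _ (by positivity)
    calc (H * a) ^ 2 = H ^ 2 * a ^ 2 := by ring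
      _ ≤ H ^ 2 * (AM * μ ^ 2 / (4 * H ^ 2 * BM)) := by gcongr
      _ = (AM / BM) * μ ^ 2 / 4 := by field_simp
      _ = _ := by rw [← hq2]; ring
  have k2 : F ≤ q * μ / 4 := by
    apply le_of_sq_le_sq _ (by positivity)
    calc F ^ 2 ≤ AM * μ ^ 2 / (16 * BM) := h2
      _ = (AM / BM) * μ ^ 2 / 16 := by field_simp
      _ = _ := by rw [← hq2]; ring
  have k3 : b ≤ 3 / 4 * q * a := by
    have : μ * b ≤ μ * (3 / 4 * q * a) := by
      nlinarith [mul_le_mul_of_nonneg_right k1 ha, mul_le_mul_of_nonneg_right k2 ha]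
    exact le_of_mul_le_mul_left this hμ
  calc b ^ 2 ≤ (3 / 4 * q * a) ^ 2 := by gcongr
    _ = _ := by ring

/-- Theorem 4.8 (linear convergence of BL1), in the case `p = 1` with deterministic
contraction compressors for both Hessians and models. -/
theorem bl1_linear_convergence (d n : ℕ) (hn : 1 ≤ n)
    (f : Fin n → EuclideanSpace ℝ (Fin d) → ℝ)
    (hf : ∀ i, ContDiff ℝ 2 (f i))
    (μ : ℝ) (hμ : 0 < μ)
    (fbar : EuclideanSpace ℝ (Fin d) → ℝ)
    (hfbar : fbar = fun x => (1 / (n : ℝ)) * ∑ i, f i x)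
    (hsc : ∀ x, ((hess fbar x) - μ • (1 : Matrix (Fin d) (Fin d) ℝ)).PosSemidef)
    (H : ℝ)
    (hH : ∀ i x y, specNorm (hess (f i) x - hess (f i) y) ≤ H * ‖x - y‖)
    (xstar : EuclideanSpace ℝ (Fin d)) (hstar : gradient fbar xstar = 0)
    (R : ℝ) (B : Fin n → Fin d → Fin d → Matrix (Fin d) (Fin d) ℝ)
    (hBR : ∀ i j l, frobNorm (B i j l) ≤ R)
    (ℓ : Fin n → EuclideanSpace ℝ (Fin d) → Matrix (Fin d) (Fin d) ℝ)
    (hrep : ∀ i x, hess (f i) x = ∑ j, ∑ l, (ℓ i x) j l • B i j l)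
    (M₁ : ℝ)
    (hℓLip : ∀ i x y, frobNorm (ℓ i x - ℓ i y) ≤ M₁ * ‖x - y‖)
    (NB : ℝ)
    (hNB : NB = if (∀ i (j l j' l' : Fin d), (j, l) ≠ (j', l') →
        frobInner (B i j l) (B i j' l') = 0) then (1 : ℝ) else (d : ℝ) ^ 2)
    (δ δM : ℝ) (hδ0 : 0 < δ) (hδ1 : δ ≤ 1) (hδM0 : 0 < δM) (hδM1 : δM ≤ 1)
    (AM BM : ℝ) (hAM : AM = δM / 4) (hBM : BM = 6 / δM - 7 / 2)
    (z x v : ℕ → EuclideanSpace ℝ (Fin d))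
    (L S : ℕ → Fin n → Matrix (Fin d) (Fin d) ℝ)
    (hS : ∀ k i, frobSq (S k i - (ℓ i (z k) - L k i))
      ≤ (1 - δ) * frobSq (ℓ i (z k) - L k i))
    (hL : ∀ k i, L (k + 1) i = L k i + S k i)
    (Hmat : ℕ → Matrix (Fin d) (Fin d) ℝ)
    (hHmat : ∀ k, Hmat k = (1 / (n : ℝ)) • ∑ i, ∑ j, ∑ l, (L k i) j l • B i j l)
    (Hhat : ℕ → Matrix (Fin d) (Fin d) ℝ)
    (hHhatsymm : ∀ k, (Hhat k).IsSymm)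
    (hHhatpsd : ∀ k, (Hhat k - μ • (1 : Matrix (Fin d) (Fin d) ℝ)).PosSemidef)
    (hHhatproj : ∀ k, frobNorm (Hhat k - hess fbar xstar)
      ≤ frobNorm (Hmat k - hess fbar xstar))
    (hx : ∀ k, x (k + 1) = z k
      - Matrix.toEuclideanCLM (𝕜 := ℝ) (Hhat k)⁻¹ (gradient fbar (z k)))
    (hv : ∀ k, ‖v k - (x (k + 1) - z k)‖ ^ 2 ≤ (1 - δM) * ‖x (k + 1) - z k‖ ^ 2)
    (hz : ∀ k, z (k + 1) = z k + v k)
    (𝓗 : ℕ → ℝ)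
    (h𝓗 : ∀ k, 𝓗 k = (1 / (n : ℝ)) * ∑ i, frobSq (L k i - ℓ i xstar))
    (hnbr1 : ∀ k, ‖z k - xstar‖ ^ 2 ≤ AM * μ ^ 2 / (4 * H ^ 2 * BM))
    (hnbr2 : ∀ k, 𝓗 k ≤ AM * μ ^ 2 / (16 * NB * R ^ 2 * BM)) :
    ∀ k, ‖z k - xstar‖ ^ 2 ≤ (1 - AM / 2) ^ k * ‖z 0 - xstar‖ ^ 2 := by
  have hn' : (0 : ℝ) < n := by exact_mod_cast hn
  have i0 : Fin n := ⟨0, hn⟩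
  by_cases hHp : H ≤ 0
  · have hz0 : ∀ k, ‖z k - xstar‖ ^ 2 = 0 := by
      intro k
      rcases hHp.eq_or_lt with h0 | h0
      · have := hnbr1 k
        rw [h0] at this
        norm_num at this
        rw [this]; simp
      · have h1 := hH i0 (z k) xstar
        have h2 : 0 ≤ specNorm (hess (f i0) (z k) - hess (f i0) xstar) := norm_nonneg _
        have h3 := norm_nonneg (z k - xstar)
        have : ‖z k - xstar‖ = 0 := by nlinarith
        rw [this]; norm_num
    intro k
    rw [hz0 k, hz0 0]; simp
  push Not at hHp
  -- Frobenius bound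
  have hBsq : ∀ i j l, frobSq (B i j l) ≤ R ^ 2 := by
    intro i j l
    have h1 := hBR i j l
    have h2 : 0 ≤ frobNorm (B i j l) := Real.sqrt_nonneg _
    rw [← Real.sq_sqrt (frobSq_nonneg' (B i j l))]
    exact pow_le_pow_left₀ h2 h1 2
  have hexp : ∀ i (c : Matrix (Fin d) (Fin d) ℝ),
      frobSq (∑ j, ∑ l, c j l • B i j l) ≤ NB * R ^ 2 * frobSq c := by
    intro i c
    rw [hNB]
    split_ifs with ho
    · exact frob_expand_orth c (B i) R (hBsq i) (ho i)
    · exact frob_expand_gen c (B i) R (hBsq i)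
  have hNB0 : 0 ≤ NB := by rw [hNB]; split_ifs <;> positivity
  have hBM0 : 0 < BM := by
    rw [hBM]
    have : 6 ≤ 6 / δM := by rw [le_div_iff₀ hδM0]; linarith
    linarith
  have hAM0 : 0 < AM := by rw [hAM]; positivity
  have hfro : ∀ k, frobSq (Hmat k - hess fbar xstar) ≤ AM * μ ^ 2 / (16 * BM) := by
    intro k
    have e : Hmat k - hess fbar xstar =
        (1 / (n : ℝ)) • ∑ i, ∑ j, ∑ l, (L k i - ℓ i xstar) j l • B i j l := by
      rw [hHmat, hfbar, hess_avg f hf, ← _root_.smul_sub, ← Finset.sum_sub_distrib]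
      congr 1
      refine Finset.sum_congr rfl fun i _ => ?_
      rw [hrep]
      simp only [← Finset.sum_sub_distrib, ← _root_.sub_smul, Matrix.sub_apply]
    have h1 : frobSq (Hmat k - hess fbar xstar) ≤ NB * R ^ 2 * 𝓗 k := by
      rw [e]
      refine (frob_avg hn _).trans ?_
      rw [h𝓗]
      calc _ ≤ (1 / (n : ℝ)) * ∑ i, NB * R ^ 2 * frobSq (L k i - ℓ i xstar) := by
            gcongr with i; exact hexp i _
        _ = _ := by rw [← Finset.mul_sum]; ring
    have h2 : 0 ≤ NB * R ^ 2 := by positivity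
    refine (h1.trans (mul_le_mul_of_nonneg_left (hnbr2 k) h2)).trans ?_
    rcases h2.eq_or_lt with h0 | h0
    · rw [← h0, zero_mul]; positivity
    · have : 16 * NB * R ^ 2 * BM = (NB * R ^ 2) * (16 * BM) := by ring
      rw [this]
      generalize NB * R ^ 2 = Q at h0
      apply le_of_eq
      field_simp
  have key : ∀ k, ‖z (k + 1) - xstar‖ ^ 2 ≤ (1 - AM / 2) * ‖z k - xstar‖ ^ 2 := by
    intro k
    have hmul : Matrix.toEuclideanCLM (𝕜 := ℝ) (Hhat k) (x (k + 1) - xstar) =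
        Matrix.toEuclideanCLM (𝕜 := ℝ) (Hhat k - hess fbar xstar) (z k - xstar)
        - (gradient fbar (z k) - gradient fbar xstar
          - Matrix.toEuclideanCLM (𝕜 := ℝ) (hess fbar xstar) (z k - xstar)) := by
      have e1 : Matrix.toEuclideanCLM (𝕜 := ℝ) (Hhat k)
          (Matrix.toEuclideanCLM (𝕜 := ℝ) (Hhat k)⁻¹ (gradient fbar (z k))) = gradient fbar (z k) := by
        have := congrArg (Matrix.toEuclideanCLM (𝕜 := ℝ))
          (Matrix.mul_nonsing_inv _ (det_unit (Hhat k) μ hμ (hHhatpsd k)))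
        rw [map_mul, map_one] at this
        exact congrArg (fun T => T (gradient fbar (z k))) this
      have e2 : x (k + 1) - xstar = (z k - xstar)
          - Matrix.toEuclideanCLM (𝕜 := ℝ) (Hhat k)⁻¹ (gradient fbar (z k)) := by
        rw [hx]; abel
      rw [e2, map_sub, e1, hstar, map_sub (Matrix.toEuclideanCLM (𝕜 := ℝ)), _root_.sub_apply]
      abel
    have hc := coercive (Hhat k) μ hμ (hHhatpsd k) (x (k + 1) - xstar)
    have ht := taylor_avg hn f hf H hHp.le hH (z k) xstar fbar hfbar
    have hfr := norm_apply_le_frob (Hhat k - hess fbar xstar) (z k - xstar)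
    have h3 : μ * ‖x (k + 1) - xstar‖ ≤ frobNorm (Hhat k - hess fbar xstar) * ‖z k - xstar‖
        + H * ‖z k - xstar‖ ^ 2 := by
      refine hc.trans ?_
      rw [hmul]
      exact (norm_sub_le _ _).trans (add_le_add hfr ht)
    have hF0 : 0 ≤ frobNorm (Hhat k - hess fbar xstar) := Real.sqrt_nonneg _
    have hF2 : frobNorm (Hhat k - hess fbar xstar) ^ 2 ≤ AM * μ ^ 2 / (16 * BM) := by
      refine (pow_le_pow_left₀ hF0 (hHhatproj k) 2).trans ?_
      rw [frobNorm, Real.sq_sqrt (frobSq_nonneg' _)]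
      exact hfro k
    have hb := main_step δM μ H ‖z k - xstar‖ ‖x (k + 1) - xstar‖ _ hδM0 hδM1 hμ hHp
      (norm_nonneg _) (norm_nonneg _) hF0 AM BM hAM hBM (hnbr1 k) hF2 h3
    have hab : ‖x (k + 1) - z k‖ ≤ ‖z k - xstar‖ + ‖x (k + 1) - xstar‖ := by
      have : x (k + 1) - z k = (x (k + 1) - xstar) - (z k - xstar) := by abel
      rw [this]
      exact (norm_sub_le _ _).trans (add_comm _ _).le
    have he : ‖v k - (x (k + 1) - z k)‖ ≤ (1 - δM / 2) * ‖x (k + 1) - z k‖ := by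
      apply le_of_sq_le_sq _ (mul_nonneg (by linarith) (norm_nonneg _))
      refine (hv k).trans ?_
      rw [mul_pow]
      gcongr
      nlinarith
    have hfin : ‖z (k + 1) - xstar‖ ≤ ‖x (k + 1) - xstar‖
        + (1 - δM / 2) * (‖z k - xstar‖ + ‖x (k + 1) - xstar‖) := by
      have : z (k + 1) - xstar = (x (k + 1) - xstar) + (v k - (x (k + 1) - z k)) := by
        rw [hz]; abel
      rw [this]
      refine (norm_add_le _ _).trans ?_
      gcongr
      refine he.trans (mul_le_mul_of_nonneg_left hab (by linarith))
    have := step_real δM _ _ _ hδM0 hδM1 (norm_nonneg _) (norm_nonneg _) (norm_nonneg _) hb hfin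
    rw [hAM]
    have e : 1 - δM / 4 / 2 = 1 - δM / 8 := by ring
    rw [e]; exact this
  intro k
  induction k with
  | zero => simp
  | succ k ih =>
    refine (key k).trans ?_
    rw [pow_succ]
    have : 0 ≤ 1 - AM / 2 := by rw [hAM]; linarith
    calc _ ≤ (1 - AM / 2) * ((1 - AM / 2) ^ k * ‖z 0 - xstar‖ ^ 2) :=
          mul_le_mul_of_nonneg_left ih this
      _ = _ := by ring
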